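/- Let G = (X, Σ, P, X0) be an initialized CFG in normal form and let k = |X|. Then Parikh(L(G)) = Parikh(L^{(k+1)}(G)). -/

import Mathlib

/-!
Every derivable Parikh vector is the Parikh vector of a derivation tree, and two facts about trees
give the theorem. The *dimension* of a binary tree is its Strahler number: leaves have dimension
`0`, and a node has the maximum of the dimensions of its children, plus one if these are equal.

* A tree of dimension `d` gives a derivation of index `d + 1`: at each node, expand the child of
  smaller dimension completely before touching the other (`Tree.exists_derivesIdx`).
* Every tree can be rearranged, without changing its root, Parikh vector, set `S` of variables or
  size, into one of dimension at most `|S|` (`Tree.exists_dim_le_card`). If both subtrees of a node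
  already satisfy the bound and the whole tree does not, then both subtrees have dimension `|S|`
  and contain all of `S`. A path in the second one then repeats a variable `X`
  (`Tree.exists_pump`), and the part between the two occurrences can be cut out and inserted at
  an occurrence of `X` in the first one (`Tree.insert_ctx`). This makes the second subtree smaller, so
  the process stops.

Only Parikh vectors, variable sets, sizes and dimensions of trees matter, so trees are represented
by inductive predicates recording these data.
-/

/-- A context-free grammar given by a set of productions. -/
structure CFG' (T N : Type) where
  P : Set (N × List (Symbol T N))

namespace CFG'

variable {T N : Type}

/-- One-step derivation relation of a grammar. -/
inductive Step (G : CFG' T N) : List (Symbol T N) → List (Symbol T N) → Prop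
  | step {A : N} {w : List (Symbol T N)} (y z : List (Symbol T N)) :
      (A, w) ∈ G.P → Step G (y ++ [Symbol.nonterminal A] ++ z) (y ++ w ++ z)

/-- Reflexive-transitive closure of the one-step derivation relation. -/
def Derives (G : CFG' T N) : List (Symbol T N) → List (Symbol T N) → Prop :=
  Relation.ReflTransGen G.Step

/-- Every production lies in `X × (XX ∪ Γ ∪ {ε})`. -/
def NormalForm (G : CFG' T N) : Prop :=
  ∀ p ∈ G.P,
    (∃ B C : N, p.2 = [Symbol.nonterminal B, Symbol.nonterminal C]) ∨
    (∃ a : T, p.2 = [Symbol.terminal a]) ∨ p.2 = []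

/-- Every production lies in `X × ((Γ·X) ∪ {ε})`. -/
def RegularForm (G : CFG' T N) : Prop :=
  ∀ p ∈ G.P,
    (∃ (a : T) (B : N), p.2 = [Symbol.terminal a, Symbol.nonterminal B]) ∨ p.2 = []

end CFG'
/-- The number of occurrences of variables in a sentential form. -/
def numVars {T N : Type} (α : List (Symbol T N)) : ℕ :=
  (α.filter fun s => match s with
    | Symbol.nonterminal _ => true
    | Symbol.terminal _ => false).length

/-- Index-bounded derivations: every sentential form along the derivation contains at
most `k` occurrences of variables. -/
inductive CFG'.DerivesIdx {T N : Type} (G : CFG' T N) (k : ℕ) :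
    List (Symbol T N) → List (Symbol T N) → Prop
  | refl (α : List (Symbol T N)) : numVars α ≤ k → G.DerivesIdx k α α
  | tail {α β γ : List (Symbol T N)} :
      G.DerivesIdx k α β → G.Step β γ → numVars γ ≤ k → G.DerivesIdx k α γ

namespace ParikhIndex

variable {A N : Type} {G : CFG' A N}

/-! ### Index-bounded derivations -/

theorem numVars_append (α β : List (Symbol A N)) :
    numVars (α ++ β) = numVars α + numVars β := by
  simp [numVars]

theorem numVars_terminal (w : List A) :
    numVars (w.map Symbol.terminal : List (Symbol A N)) = 0 := by
  simp [numVars]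

theorem derivesIdx_trans {k : ℕ} {α β γ : List (Symbol A N)}
    (h₁ : G.DerivesIdx k α β) (h₂ : G.DerivesIdx k β γ) : G.DerivesIdx k α γ := by
  induction h₂ with
  | refl => exact h₁
  | tail _ hs hk ih => exact ih.tail hs hk

theorem derives_of_derivesIdx {k : ℕ} {α β : List (Symbol A N)}
    (h : G.DerivesIdx k α β) : G.Derives α β := by
  induction h with
  | refl => exact .refl
  | tail _ hs _ ih => exact Relation.ReflTransGen.tail ih hs

/-- A derivation can be carried out inside a larger sentential form, at the cost of the variables
of the surrounding parts. -/
theorem derivesIdx_congr {k l : ℕ} {α β : List (Symbol A N)} (u v : List (Symbol A N))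
    (h : G.DerivesIdx k α β) (hl : k + numVars u + numVars v ≤ l) :
    G.DerivesIdx l (u ++ α ++ v) (u ++ β ++ v) := by
  induction h with
  | refl hk => exact .refl _ (by simp only [numVars_append]; omega)
  | tail _ hs hk ih =>
    refine ih.tail ?_ (by simp only [numVars_append]; omega)
    obtain ⟨y, z, hp⟩ := hs
    simpa using CFG'.Step.step (u ++ y) (z ++ v) hp

theorem derivesIdx_mono {k l : ℕ} {α β : List (Symbol A N)}
    (h : G.DerivesIdx k α β) (hl : k ≤ l) : G.DerivesIdx l α β := by
  simpa using derivesIdx_congr [] [] h (by simpa [numVars] using hl)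

theorem derivesIdx_production {k : ℕ} {X : N} {α : List (Symbol A N)} (hp : (X, α) ∈ G.P)
    (hk : 1 ≤ k) (hα : numVars α ≤ k) : G.DerivesIdx k [Symbol.nonterminal X] α :=
  .tail (.refl _ hk) (by simpa using CFG'.Step.step [] [] hp) hα

/-! ### Derivation trees and contexts -/

variable [DecidableEq N]

/-- The Strahler number of a binary node whose children have Strahler numbers `a` and `b`. -/
def comb (a b : ℕ) : ℕ := if a = b then a + 1 else max a b

/-- `Tree G X m S n d`: some derivation tree with root `X` has a terminal yield with Parikh vector
`m`, `S` as its set of variables, `n` nodes labelled by variables, and dimension `d`. -/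
inductive Tree (G : CFG' A N) : N → Multiset A → Finset N → ℕ → ℕ → Prop
  | leaf {X : N} {a : A} : (X, [Symbol.terminal a]) ∈ G.P → Tree G X {a} {X} 1 0
  | eps {X : N} : (X, []) ∈ G.P → Tree G X 0 {X} 1 0
  | node {X B C : N} {m₁ m₂ : Multiset A} {S₁ S₂ : Finset N} {n₁ n₂ d₁ d₂ : ℕ} :
      (X, [Symbol.nonterminal B, Symbol.nonterminal C]) ∈ G.P →
      Tree G B m₁ S₁ n₁ d₁ → Tree G C m₂ S₂ n₂ d₂ →
      Tree G X (m₁ + m₂) (insert X (S₁ ∪ S₂)) (n₁ + n₂ + 1) (comb d₁ d₂)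

/-- `Ctx G X Y m S n`: some derivation tree with root `X` and a hole in place of one subtree with
root `Y` has Parikh vector `m`, variables `S` and `n` nodes labelled by variables, where the hole
itself contributes nothing to `m`, `S` and `n`. -/
inductive Ctx (G : CFG' A N) : N → N → Multiset A → Finset N → ℕ → Prop
  | hole {X : N} : Ctx G X X 0 ∅ 0
  | left {X Y B C : N} {m₁ m₂ : Multiset A} {S₁ S₂ : Finset N} {n₁ n₂ d₂ : ℕ} :
      (X, [Symbol.nonterminal B, Symbol.nonterminal C]) ∈ G.P →
      Ctx G B Y m₁ S₁ n₁ → Tree G C m₂ S₂ n₂ d₂ →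
      Ctx G X Y (m₁ + m₂) (insert X (S₁ ∪ S₂)) (n₁ + n₂ + 1)
  | right {X Y B C : N} {m₁ m₂ : Multiset A} {S₁ S₂ : Finset N} {n₁ n₂ d₁ : ℕ} :
      (X, [Symbol.nonterminal B, Symbol.nonterminal C]) ∈ G.P →
      Tree G B m₁ S₁ n₁ d₁ → Ctx G C Y m₂ S₂ n₂ →
      Ctx G X Y (m₁ + m₂) (insert X (S₁ ∪ S₂)) (n₁ + n₂ + 1)

theorem Tree.root_mem {X : N} {m : Multiset A} {S : Finset N} {n d : ℕ}
    (h : Tree G X m S n d) : X ∈ S := by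
  cases h <;> simp

theorem Tree.cast {X : N} {m m' : Multiset A} {S S' : Finset N} {n n' d : ℕ}
    (h : Tree G X m S n d) (hm : m = m') (hS : S = S') (hn : n = n') : Tree G X m' S' n' d := by
  subst hm hS hn; exact h

theorem Ctx.cast {X Y : N} {m m' : Multiset A} {S S' : Finset N} {n n' : ℕ}
    (h : Ctx G X Y m S n) (hm : m = m') (hS : S = S') (hn : n = n') : Ctx G X Y m' S' n' := by
  subst hm hS hn; exact h

/-- Filling the hole of a context with a tree. -/
theorem Ctx.plug {X Y : N} {m m' : Multiset A} {S S' : Finset N} {n n' d' : ℕ}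
    (h : Ctx G X Y m S n) (t : Tree G Y m' S' n' d') :
    ∃ d, Tree G X (m + m') (S ∪ S') (n + n') d := by
  induction h with
  | hole => exact ⟨d', t.cast (by simp) (by simp) (by simp)⟩
  | left hp _ hC ih =>
    obtain ⟨d, hd⟩ := ih t
    exact ⟨_, (Tree.node hp hd hC).cast (by abel) (by ext; simp; tauto) (by omega)⟩
  | right hp hB _ ih =>
    obtain ⟨d, hd⟩ := ih t
    exact ⟨_, (Tree.node hp hB hd).cast (by abel) (by simp) (by omega)⟩

/-- A context whose root and hole carry the same variable `Y` can be inserted into any tree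
containing `Y`. -/
theorem Tree.insert_ctx {X Y : N} {m m' : Multiset A} {S S' : Finset N} {n n' d : ℕ}
    (t : Tree G X m S n d) (hY : Y ∈ S) (c : Ctx G Y Y m' S' n') :
    ∃ d', Tree G X (m + m') (S ∪ S') (n + n') d' := by
  have root {m : Multiset A} {S : Finset N} {n d : ℕ} (t : Tree G Y m S n d) :
      ∃ d', Tree G Y (m + m') (S ∪ S') (n + n') d' := by
    obtain ⟨d', h⟩ := c.plug t
    exact ⟨d', h.cast (add_comm _ _) (Finset.union_comm _ _) (add_comm _ _)⟩
  induction t with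
  | leaf hp =>
    obtain rfl := Finset.mem_singleton.1 hY
    exact root (.leaf hp)
  | eps hp =>
    obtain rfl := Finset.mem_singleton.1 hY
    exact root (.eps hp)
  | node hp hB hC ihB ihC =>
    rcases Finset.mem_insert.1 hY with rfl | hY
    · exact root (.node hp hB hC)
    rcases Finset.mem_union.1 hY with hY | hY
    · obtain ⟨d', h⟩ := ihB hY
      exact ⟨_, (Tree.node hp h hC).cast (by abel) (by ext; simp; tauto) (by omega)⟩
    · obtain ⟨d', h⟩ := ihC hY
      exact ⟨_, (Tree.node hp hB h).cast (by abel) (by simp) (by omega)⟩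

/-! ### Bounding the dimension -/

/-- A tree with the given data splits into a smaller tree with the same root and a nonempty
context from `Y` to `Y`, for some variable `Y` of the tree. -/
def Pump (G : CFG' A N) (X : N) (m : Multiset A) (S : Finset N) (n : ℕ) : Prop :=
  ∃ (Y : N) (m₁ m₂ : Multiset A) (S₁ S₂ : Finset N) (n₁ n₂ d₁ : ℕ),
    Tree G X m₁ S₁ n₁ d₁ ∧ Ctx G Y Y m₂ S₂ n₂ ∧ Y ∈ S ∧ 0 < n₂ ∧
    m = m₁ + m₂ ∧ S = S₁ ∪ S₂ ∧ n = n₁ + n₂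

/-- A tree with the given data splits into a context with a hole `Y ∈ V` and a tree rooted
at `Y`. -/
def Split (G : CFG' A N) (V : Finset N) (X : N) (m : Multiset A) (S : Finset N) (n : ℕ) : Prop :=
  ∃ (Y : N) (m₁ m₂ : Multiset A) (S₁ S₂ : Finset N) (n₁ n₂ d₂ : ℕ),
    Y ∈ V ∧ Ctx G X Y m₁ S₁ n₁ ∧ Tree G Y m₂ S₂ n₂ d₂ ∧
    m = m₁ + m₂ ∧ S = S₁ ∪ S₂ ∧ n = n₁ + n₂

theorem Tree.split_of_mem {V : Finset N} {X : N} {m : Multiset A} {S : Finset N} {n d : ℕ}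
    (t : Tree G X m S n d) (hX : X ∈ V) : Split G V X m S n :=
  ⟨X, 0, m, ∅, S, 0, n, d, hX, .hole, t, by simp, by simp, by simp⟩

theorem card_sdiff_insert_add_one {U V : Finset N} {X : N} (hX : X ∈ U) (hV : X ∉ V) :
    (U \ insert X V).card + 1 = (U \ V).card := by
  rw [Finset.sdiff_insert]
  exact Finset.card_erase_add_one (by simp [hX, hV])

/-- Follow a path from the root along which the dimension drops by at most one per step, where `V`
is the set of variables already seen above the root. As the dimension is at least the number of
unseen variables, the path meets a variable of `V` or repeats a variable below. -/
theorem Tree.pump_or_split {U : Finset N} {X : N} {m : Multiset A} {S : Finset N} {n d : ℕ}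
    (t : Tree G X m S n d) (hU : S ⊆ U) (V : Finset N) (hd : (U \ V).card ≤ d) :
    Pump G X m S n ∨ Split G V X m S n := by
  induction t generalizing V with
  | @leaf X a hp =>
    by_cases hX : X ∈ V
    · exact .inr ((Tree.leaf hp).split_of_mem hX)
    · have := card_sdiff_insert_add_one (hU (by simp)) hX
      omega
  | @eps X hp =>
    by_cases hX : X ∈ V
    · exact .inr ((Tree.eps hp).split_of_mem hX)
    · have := card_sdiff_insert_add_one (hU (by simp)) hX
      omega
  | @node X B C m₁ m₂ S₁ S₂ n₁ n₂ d₁ d₂ hp hB hC ihB ihC =>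
    by_cases hX : X ∈ V
    · exact .inr ((Tree.node hp hB hC).split_of_mem hX)
    have hcard := card_sdiff_insert_add_one (hU (by simp)) hX
    have hU₁ : S₁ ⊆ U := fun x hx => hU (by simp [hx])
    have hU₂ : S₂ ⊆ U := fun x hx => hU (by simp [hx])
    have hchild : (U \ insert X V).card ≤ d₁ ∨ (U \ insert X V).card ≤ d₂ := by
      unfold comb at hd
      split_ifs at hd <;> omega
    -- A split of the child at `X` itself is a repetition of `X`; other outcomes are inherited.
    rcases hchild with hle | hle
    · rcases ihB hU₁ (insert X V) hle with h | h
      · obtain ⟨Y, p₁, p₂, T₁, T₂, k₁, k₂, e, ht, hc, hY, hk, rfl, rfl, rfl⟩ := h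
        exact .inl ⟨Y, _, p₂, _, T₂, _, k₂, _, .node hp ht hC, hc,
          Finset.mem_insert_of_mem (Finset.mem_union_left _ hY), hk, by abel,
          by ext; simp; tauto, by omega⟩
      · obtain ⟨Y, p₁, p₂, T₁, T₂, k₁, k₂, e, hY, hc, ht, rfl, rfl, rfl⟩ := h
        rcases Finset.mem_insert.1 hY with rfl | hY
        · have := ht.root_mem
          exact .inl ⟨Y, p₂, _, T₂, _, k₂, _, e, ht, .left hp hc hC, by simp, by omega, by abel,
            by ext; simp; grind, by omega⟩
        · exact .inr ⟨Y, _, p₂, _, T₂, _, k₂, e, hY, .left hp hc hC, ht, by abel,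
            by ext; simp; tauto, by omega⟩
    · rcases ihC hU₂ (insert X V) hle with h | h
      · obtain ⟨Y, p₁, p₂, T₁, T₂, k₁, k₂, e, ht, hc, hY, hk, rfl, rfl, rfl⟩ := h
        exact .inl ⟨Y, _, p₂, _, T₂, _, k₂, _, .node hp hB ht, hc,
          Finset.mem_insert_of_mem (Finset.mem_union_right _ hY), hk, by abel,
          by simp, by omega⟩
      · obtain ⟨Y, p₁, p₂, T₁, T₂, k₁, k₂, e, hY, hc, ht, rfl, rfl, rfl⟩ := h
        rcases Finset.mem_insert.1 hY with rfl | hY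
        · have := ht.root_mem
          exact .inl ⟨Y, p₂, _, T₂, _, k₂, _, e, ht, .right hp hB hc, by simp, by omega, by abel,
            by ext; simp; grind, by omega⟩
        · exact .inr ⟨Y, _, p₂, _, T₂, _, k₂, e, hY, .right hp hB hc, ht, by abel,
            by simp, by omega⟩

/-- A tree whose dimension is at least its number of distinct variables contains a repeated
variable on some path. -/
theorem Tree.exists_pump {X : N} {m : Multiset A} {S : Finset N} {n d : ℕ}
    (t : Tree G X m S n d) (hd : S.card ≤ d) : Pump G X m S n := by
  rcases t.pump_or_split (U := S) subset_rfl ∅ (by simpa using hd) with h | ⟨Y, h⟩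
  · exact h
  · simp at h

/-- Any tree can be rearranged into one of dimension at most its number of distinct variables,
with the same root, Parikh vector, variables and size. -/
theorem Tree.exists_dim_le_card {X : N} {m : Multiset A} {S : Finset N} {n d : ℕ}
    (t : Tree G X m S n d) : ∃ d', d' ≤ S.card ∧ Tree G X m S n d' := by
  induction n using Nat.strong_induction_on generalizing X m S d with
  | _ n ih =>
  cases t with
  | leaf hp => exact ⟨0, by simp, .leaf hp⟩
  | eps hp => exact ⟨0, by simp, .eps hp⟩
  | @node _ B C m₁ m₂ S₁ S₂ n₁ n₂ d₁ d₂ hp hB hC =>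
    -- For a fixed total size, induct on the size of the second subtree.
    generalize hN : n₁ + n₂ + 1 = n at ih ⊢
    induction n₂ using Nat.strong_induction_on generalizing n₁ m₁ m₂ S₁ S₂ d₁ d₂ with
    | _ n₂ ih₂ =>
    obtain ⟨e₁, he₁, hB⟩ := ih n₁ (by omega) hB
    obtain ⟨e₂, he₂, hC⟩ := ih n₂ (by omega) hC
    by_cases hle : comb e₁ e₂ ≤ (insert X (S₁ ∪ S₂)).card
    · exact ⟨_, hle, (Tree.node hp hB hC).cast rfl rfl hN⟩
    -- Otherwise both subtrees contain every variable and have maximal dimension.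
    have h₁ : S₁ ⊆ insert X (S₁ ∪ S₂) := fun x hx => by simp [hx]
    have h₂ : S₂ ⊆ insert X (S₁ ∪ S₂) := fun x hx => by simp [hx]
    have c₁ := Finset.card_le_card h₁
    have c₂ := Finset.card_le_card h₂
    have hdim : (insert X (S₁ ∪ S₂)).card ≤ e₁ ∧ (insert X (S₁ ∪ S₂)).card ≤ e₂ := by
      unfold comb at hle
      split_ifs at hle <;> omega
    have hS₁ := Finset.eq_of_subset_of_card_le h₁ (by omega)
    obtain ⟨Y, p₁, p₂, T₁, T₂, k₁, k₂, e, ht, hc, hY, hk, rfl, rfl, rfl⟩ :=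
      hC.exists_pump (by omega)
    obtain ⟨e', hB'⟩ := hB.insert_ctx (hS₁ ▸ h₂ hY) hc
    obtain ⟨d', hd', ht'⟩ := ih₂ k₁ (by omega) hB' ht (by omega)
    have hS : insert X (S₁ ∪ T₂ ∪ T₁) = insert X (S₁ ∪ (T₁ ∪ T₂)) := by ext; simp; tauto
    exact ⟨d', hS ▸ hd', ht'.cast (by abel) hS rfl⟩

/-! ### Trees and derivations -/

/-- Some sequence of derivation trees, one for each variable of the sentential form, yields a
terminal word with Parikh vector `m`. -/
def Forest (G : CFG' A N) : List (Symbol A N) → Multiset A → Prop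
  | [], m => m = 0
  | Symbol.terminal a :: α, m => ∃ m', Forest G α m' ∧ m = {a} + m'
  | Symbol.nonterminal X :: α, m =>
      ∃ m₁ m₂ S n d, Tree G X m₁ S n d ∧ Forest G α m₂ ∧ m = m₁ + m₂

theorem forest_append {α β : List (Symbol A N)} {m : Multiset A} :
    Forest G (α ++ β) m ↔ ∃ m₁ m₂, Forest G α m₁ ∧ Forest G β m₂ ∧ m = m₁ + m₂ := by
  induction α generalizing m with
  | nil => simp [Forest]
  | cons s α ih =>
    cases s with
    | terminal a =>
      simp only [List.cons_append, Forest, ih]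
      constructor
      · rintro ⟨_, ⟨m₁, m₂, h₁, h₂, rfl⟩, rfl⟩
        exact ⟨_, m₂, ⟨m₁, h₁, rfl⟩, h₂, by abel⟩
      · rintro ⟨_, m₂, ⟨m₁, h₁, rfl⟩, h₂, rfl⟩
        exact ⟨_, ⟨m₁, m₂, h₁, h₂, rfl⟩, by abel⟩
    | nonterminal X =>
      simp only [List.cons_append, Forest, ih]
      constructor
      · rintro ⟨m₀, _, S, n, d, t, ⟨m₁, m₂, h₁, h₂, rfl⟩, rfl⟩
        exact ⟨_, m₂, ⟨m₀, m₁, S, n, d, t, h₁, rfl⟩, h₂, by abel⟩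
      · rintro ⟨_, m₂, ⟨m₀, m₁, S, n, d, t, h₁, rfl⟩, h₂, rfl⟩
        exact ⟨m₀, _, S, n, d, t, ⟨m₁, m₂, h₁, h₂, rfl⟩, by abel⟩

theorem forest_singleton {X : N} {m : Multiset A} :
    Forest G [Symbol.nonterminal X] m ↔ ∃ S n d, Tree G X m S n d := by
  simp [Forest]

theorem forest_terminal (w : List A) : Forest G (w.map Symbol.terminal) (w : Multiset A) := by
  induction w with
  | nil => simp [Forest]
  | cons a w ih => exact ⟨_, ih, rfl⟩

/-- The inverse of a production step joins the trees of a right-hand side into one tree. -/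
theorem forest_of_production (hG : G.NormalForm) {X : N} {α : List (Symbol A N)}
    (hp : (X, α) ∈ G.P) {m : Multiset A} (h : Forest G α m) :
    Forest G [Symbol.nonterminal X] m := by
  rw [forest_singleton]
  rcases hG _ hp with ⟨B, C, rfl⟩ | ⟨a, rfl⟩ | rfl
  · obtain ⟨m₁, _, S₁, n₁, d₁, hB, ⟨m₂, _, S₂, n₂, d₂, hC, rfl, rfl⟩, rfl⟩ := h
    exact ⟨_, _, _, (Tree.node hp hB hC).cast (by simp) rfl rfl⟩
  · obtain ⟨_, rfl, rfl⟩ := h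
    exact ⟨_, _, _, (Tree.leaf hp).cast (by simp) rfl rfl⟩
  · obtain rfl := h
    exact ⟨_, _, _, .eps hp⟩

theorem forest_of_derives (hG : G.NormalForm) {α : List (Symbol A N)} {w : List A}
    (h : G.Derives α (w.map Symbol.terminal)) : Forest G α (w : Multiset A) := by
  induction h using Relation.ReflTransGen.head_induction_on with
  | refl => exact forest_terminal w
  | head hstep _ ih =>
    obtain ⟨y, z, hp⟩ := hstep
    obtain ⟨_, m₃, h, h₃, hm⟩ := forest_append.1 ih
    obtain ⟨m₁, m₂, h₁, h₂, rfl⟩ := forest_append.1 h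
    exact forest_append.2 ⟨_, m₃, forest_append.2
      ⟨m₁, m₂, h₁, forest_of_production hG hp h₂, rfl⟩, h₃, hm⟩

/-- A tree of dimension `d` is traversed by a derivation of index `d + 1`: the child of smaller
dimension is expanded first, while its sibling waits as a single variable. -/
theorem Tree.exists_derivesIdx {X : N} {m : Multiset A} {S : Finset N} {n d : ℕ}
    (t : Tree G X m S n d) : ∃ w : List A, (w : Multiset A) = m ∧
      G.DerivesIdx (d + 1) [Symbol.nonterminal X] (w.map Symbol.terminal) := by
  induction t with
  | @leaf X a hp => exact ⟨[a], rfl, derivesIdx_production hp le_rfl (by simp [numVars])⟩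
  | eps hp => exact ⟨[], rfl, derivesIdx_production hp le_rfl (by simp [numVars])⟩
  | @node X B C m₁ m₂ S₁ S₂ n₁ n₂ d₁ d₂ hp _ _ ihB ihC =>
    obtain ⟨w₁, rfl, h₁⟩ := ihB
    obtain ⟨w₂, rfl, h₂⟩ := ihC
    refine ⟨w₁ ++ w₂, by simp, ?_⟩
    have hroot : 1 ≤ comb d₁ d₂ ∧ d₁ ≤ comb d₁ d₂ ∧ d₂ ≤ comb d₁ d₂ ∧
        (d₁ + 1 ≤ comb d₁ d₂ ∨ d₂ + 1 ≤ comb d₁ d₂) := by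
      unfold comb
      split_ifs <;> omega
    obtain ⟨hone, hd₁, hd₂, hlt⟩ := hroot
    refine derivesIdx_trans (derivesIdx_production hp (by omega)
      (show 2 ≤ comb d₁ d₂ + 1 by omega)) ?_
    rw [List.map_append]
    rcases hlt with hlt | hlt
    · refine derivesIdx_trans (β := w₁.map Symbol.terminal ++ [Symbol.nonterminal C]) ?_ ?_
      · simpa using derivesIdx_congr (l := comb d₁ d₂ + 1) [] [Symbol.nonterminal C] h₁
          (show d₁ + 1 + 0 + 1 ≤ _ by omega)
      · simpa using derivesIdx_congr (l := comb d₁ d₂ + 1) (w₁.map Symbol.terminal) [] h₂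
          (by rw [numVars_terminal]; show d₂ + 1 + 0 + 0 ≤ _; omega)
    · refine derivesIdx_trans (β := [Symbol.nonterminal B] ++ w₂.map Symbol.terminal) ?_ ?_
      · simpa using derivesIdx_congr (l := comb d₁ d₂ + 1) [Symbol.nonterminal B] [] h₂
          (show d₂ + 1 + 1 + 0 ≤ _ by omega)
      · simpa using derivesIdx_congr (l := comb d₁ d₂ + 1) [] (w₂.map Symbol.terminal) h₁
          (by rw [numVars_terminal]; show d₁ + 1 + 0 + 0 ≤ _; omega)

end ParikhIndex

/-- For a normal-form grammar with `k` variables,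
`Parikh(L(G)) = Parikh(L^{(k+1)}(G))`. -/
theorem parikh_language_eq_parikh_boundedIndex {A N : Type} [Fintype A] [Fintype N]
    (G : CFG' A N) (hG : G.NormalForm) (hfin : G.P.Finite) (X0 : N) :
    {m : Multiset A | ∃ w : List A,
        G.Derives [Symbol.nonterminal X0] (w.map Symbol.terminal) ∧
        (↑w : Multiset A) = m} =
      {m : Multiset A | ∃ w : List A,
        G.DerivesIdx (Fintype.card N + 1)
          [Symbol.nonterminal X0] (w.map Symbol.terminal) ∧
        (↑w : Multiset A) = m} := by
  classical
  ext m
  constructor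
  · rintro ⟨w, hw, rfl⟩
    obtain ⟨S, n, d, t⟩ := ParikhIndex.forest_singleton.1 (ParikhIndex.forest_of_derives hG hw)
    obtain ⟨d', hd', t'⟩ := t.exists_dim_le_card
    obtain ⟨w', hm, h⟩ := t'.exists_derivesIdx
    exact ⟨w', ParikhIndex.derivesIdx_mono h
      (Nat.succ_le_succ (hd'.trans (Finset.card_le_univ S))), hm⟩
  · rintro ⟨w, hw, rfl⟩
    exact ⟨w, ParikhIndex.derives_of_derivesIdx hw, rfl⟩
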